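/- arXiv:1212.2243 — 2 statements merged into one kernel-verified Lean document; each statement's English description precedes it below -/
import Mathlib

section
/- Let 𝔽 be a finite field, let a₁,…,a_n be pairwise distinct nonzero elements of 𝔽, let b ∈ 𝔽, and let 0 ≤ δ < n. For λ ∈ 𝔽^{δ+1}, λ ≠ 0, let C_λ be the 1-dimensional convolutional code generated by (s_λ(a₁z+b), …, s_λ(a_n z+b)), where s_λ(t) = Σ_{i=0}^{δ} λ_i t^i. Then {λ ≠ 0 : d_free(C_λ) = n(δ+1)} = {λ ≠ 0 : s_λ^{(j)}(b) ≠ 0 for all 0 ≤ j ≤ δ}, and this set is non-empty. -/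
open Polynomial

/-- The weight of a vector of polynomials: the total number of nonzero coefficients. -/
noncomputable def polyWeight {F : Type*} [Field F] {n : ℕ} (c : Fin n → Polynomial F) : ℕ :=
  ∑ j, (c j).support.card

/-- The free distance of a submodule of `𝔽[z]ⁿ`: the minimal weight of a nonzero element. -/
noncomputable def freeDist {F : Type*} [Field F] {n : ℕ}
    (C : Submodule (Polynomial F) (Fin n → Polynomial F)) : ℕ :=
  sInf {d | ∃ c ∈ C, c ≠ 0 ∧ polyWeight c = d}

/-- The Hamming weight of a vector. -/
noncomputable def hammingWt {F : Type*} [Field F] {n : ℕ} (v : Fin n → F) : ℕ :=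
  Set.ncard {j | v j ≠ 0}

/-- The minimum distance of a linear block code. -/
noncomputable def minDist {F : Type*} [Field F] {n : ℕ} (C : Submodule F (Fin n → F)) : ℕ :=
  sInf {d | ∃ v ∈ C, v ≠ 0 ∧ hammingWt v = d}

/-- The `l`-th row distance of the convolutional code with generator matrix `G`. -/
noncomputable def rowDist {F : Type*} [Field F] {k n : ℕ}
    (G : Fin k → Fin n → Polynomial F) (l : ℕ) : ℕ :=
  sInf {d | ∃ α : Fin k → Polynomial F, α ≠ 0 ∧ (∀ i, (α i).natDegree ≤ l) ∧
    polyWeight (fun j => ∑ i, α i * G i j) = d}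

/-- The set of maximal (`k × k`) minors of a `k × n` polynomial matrix. -/
def maximalMinors {F : Type*} [Field F] {k n : ℕ} (G : Fin k → Fin n → Polynomial F) :
    Set (Polynomial F) :=
  {p | ∃ φ : Fin k ↪ Fin n, p = Matrix.det (Matrix.of fun i j => G i (φ j))}

/-- A generator matrix is basic when its maximal minors are coprime, i.e. generate the
unit ideal of `𝔽[z]`. -/
def IsBasic {F : Type*} [Field F] {k n : ℕ} (G : Fin k → Fin n → Polynomial F) : Prop :=
  Ideal.span (maximalMinors G) = ⊤

/-- The degree of the code: the highest degree of the maximal minors of a generator matrix. -/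
noncomputable def degCode {F : Type*} [Field F] {k n : ℕ}
    (G : Fin k → Fin n → Polynomial F) : ℕ :=
  sSup (Polynomial.natDegree '' maximalMinors G)

/-- The degree of the `i`-th row of a polynomial matrix. -/
noncomputable def rowDeg {F : Type*} [Field F] {k n : ℕ}
    (G : Fin k → Fin n → Polynomial F) (i : Fin k) : ℕ :=
  Finset.univ.sup fun j => (G i j).natDegree

/-- A generator matrix is reduced when the sum of its row degrees equals the maximal degree
of its maximal minors. -/
def IsReducedMatrix {F : Type*} [Field F] {k n : ℕ} (G : Fin k → Fin n → Polynomial F) : Prop :=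
  (∑ i, rowDeg G i) = degCode G

/-- A generator matrix is canonical when it is basic and reduced. -/
def IsCanonical {F : Type*} [Field F] {k n : ℕ} (G : Fin k → Fin n → Polynomial F) : Prop :=
  IsBasic G ∧ IsReducedMatrix G

/-!
Taylor expansion at `b` turns the generator of `C_λ` into `(q(a_j z))_j`, where the coefficients of
`q` are the Hasse derivatives of `s_λ` at `b`. This generator already has weight `n · #supp q`, so
an MDS code forces `q` to have full support `{0, …, δ}`.

Conversely, let `q` have full support and consider the multiple by `p` of degree `l` with
`p(0) ≠ 0`. The coefficient of `z ^ k` in `p(z) q(a_j z)` is `P_k(a_j)` for a polynomial `P_k` whose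
exponents lie in `[k - l, k] ∩ [0, δ]`. When `P_k ≠ 0`, it has few nonzero roots, since its lowest
power of `X` factors out. Hence the number `W_k` of `j` with `P_k(a_j) ≠ 0` is at least
`n - min(k, l) = n - k + (k - l)⁺` for `k ≤ δ`, and at least `n - (δ - (k - l)) ≥ k - l` for
`max(δ + 1, l) ≤ k ≤ δ + l`. Summing over `k` yields `n (δ + 1)`, because `∑ (k - l)⁺` over
`0 ≤ k ≤ δ + l` equals `0 + 1 + ⋯ + δ`.
-/

/-- The convolutional code `⟨(s(a₁z+b), …, s(a_nz+b))⟩` generated by evaluating `s` at the affine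
polynomials `a_j z + b`; the paper's `C_λ` is the case `s = s_λ`. -/
noncomputable def goppaCode {F : Type*} [Field F] {n : ℕ} (a : Fin n → F) (b : F) (s : F[X]) :
    Submodule F[X] (Fin n → F[X]) :=
  Submodule.span F[X] {fun j => s.comp (C (a j) * X + C b)}

/-- The polynomial `P_k` whose value at `x` is the coefficient of `z ^ k` in `p(z) q(x z)`; it
turns zeros in a column of coefficients of a codeword into roots. -/
noncomputable def columnPoly {R : Type*} [Semiring R] (p q : R[X]) (k : ℕ) : R[X] :=
  ∑ i ∈ Finset.range (k + 1), monomial i (q.coeff i * p.coeff (k - i))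

section ColumnPoly

variable {R : Type*} [Semiring R] (p q : R[X]) (k : ℕ)

lemma coeff_columnPoly (i : ℕ) :
    (columnPoly p q k).coeff i = if i ≤ k then q.coeff i * p.coeff (k - i) else 0 := by
  simp [columnPoly, coeff_monomial]

variable {k} in
lemma columnPoly_ne_zero {i : ℕ} (hik : i ≤ k) (h : q.coeff i * p.coeff (k - i) ≠ 0) :
    columnPoly p q k ≠ 0 := fun h0 =>
  h (by simpa [h0, hik] using (coeff_columnPoly p q k i).symm)

lemma natDegree_columnPoly_le : (columnPoly p q k).natDegree ≤ min k q.natDegree := by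
  refine natDegree_le_iff_coeff_eq_zero.2 fun i hi => ?_
  rw [coeff_columnPoly]
  split_ifs with hik
  · rw [coeff_eq_zero_of_natDegree_lt (by omega), zero_mul]
  · rfl

variable {p q k} in
lemma sub_natDegree_le_natTrailingDegree_columnPoly (h : columnPoly p q k ≠ 0) :
    k - p.natDegree ≤ (columnPoly p q k).natTrailingDegree :=
  le_natTrailingDegree h fun i hi => by
    rw [coeff_columnPoly, coeff_eq_zero_of_natDegree_lt (p := p) (by omega), mul_zero, ite_self]

end ColumnPoly

lemma eval_columnPoly {R : Type*} [CommSemiring R] (p q : R[X]) (k : ℕ) (x : R) :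
    (columnPoly p q k).eval x = (p * q.comp (C x * X)).coeff k := by
  rw [mul_comm p, coeff_mul, Finset.Nat.sum_antidiagonal_eq_sum_range_succ_mk, columnPoly,
    eval_finsetSum]
  refine Finset.sum_congr rfl fun i _ => ?_
  rw [eval_monomial, comp_C_mul_X_coeff]
  ring

lemma card_roots_toFinset_erase_zero_le {R : Type*} [CommRing R] [IsDomain R] [DecidableEq R]
    (f : R[X]) : (f.roots.toFinset.erase 0).card ≤ f.natDegree - f.natTrailingDegree := by
  have hzero : f.roots.count 0 = f.natTrailingDegree := by
    rw [count_roots, rootMultiplicity_eq_natTrailingDegree']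
  have hsplit : (f.roots.filter (· ≠ 0)).card + f.roots.count 0 = f.roots.card := by
    rw [Multiset.count_eq_card_filter_eq, add_comm]
    simpa [eq_comm] using congrArg Multiset.card (Multiset.filter_add_not (0 = ·) f.roots)
  have hle : (f.roots.toFinset.erase 0).card ≤ (f.roots.filter (· ≠ 0)).card := by
    rw [← Finset.filter_ne', ← Multiset.toFinset_filter]
    exact Multiset.toFinset_card_le _
  have := card_roots' f
  omega

section Weight

variable {F : Type*} [Field F] {n : ℕ}

lemma hammingWt_eq_card [DecidableEq F] (v : Fin n → F) :
    hammingWt v = (Finset.univ.filter fun j => v j ≠ 0).card := by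
  rw [hammingWt, ← Set.ncard_coe_finset]
  simp

lemma le_hammingWt_eval_add {a : Fin n → F} (ha : ∀ j, a j ≠ 0) (hinj : Function.Injective a)
    {f : F[X]} (hf : f ≠ 0) :
    n ≤ hammingWt (fun j => f.eval (a j)) + (f.natDegree - f.natTrailingDegree) := by
  classical
  have hroots : (Finset.univ.filter fun j => f.eval (a j) = 0).card ≤
      (f.roots.toFinset.erase 0).card :=
    Finset.card_le_card_of_injOn a (fun j hj => by simpa [hf, ha j] using hj) hinj.injOn
  have hsum : (Finset.univ.filter fun j => f.eval (a j) = 0).card +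
      (Finset.univ.filter fun j => f.eval (a j) ≠ 0).card = n := by
    rw [Finset.card_filter_add_card_filter_not, Finset.card_univ, Fintype.card_fin]
  have := card_roots_toFinset_erase_zero_le f
  rw [hammingWt_eq_card]
  omega

lemma sum_hammingWt_coeff_le_polyWeight (c : Fin n → F[X]) (N : ℕ) :
    ∑ k ∈ Finset.range N, hammingWt (fun j => (c j).coeff k) ≤ polyWeight c := by
  classical
  simp_rw [polyWeight, hammingWt_eq_card, Finset.card_filter]
  rw [Finset.sum_comm]
  refine Finset.sum_le_sum fun j _ => ?_
  rw [← Finset.card_filter]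
  exact Finset.card_le_card fun k hk => mem_support_iff.2 (Finset.mem_filter.1 hk).2

lemma polyWeight_X_pow_smul (t : ℕ) (c : Fin n → F[X]) :
    polyWeight ((X ^ t : F[X]) • c) = polyWeight c := by
  refine Finset.sum_congr rfl fun j _ => ?_
  have hsupp : (X ^ t * c j).support = (c j).support.map (addRightEmbedding t) := by
    ext i
    simp only [mem_support_iff, coeff_X_pow_mul', Finset.mem_map, addRightEmbedding_apply]
    constructor
    · intro h
      split_ifs at h with hti
      · exact ⟨i - t, h, Nat.sub_add_cancel hti⟩
      · exact absurd rfl h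
    · rintro ⟨i, hi, rfl⟩
      simpa using hi
  rw [Pi.smul_apply, smul_eq_mul, hsupp, Finset.card_map]

lemma polyWeight_comp_C_mul_X {a : Fin n → F} (ha : ∀ j, a j ≠ 0) (q : F[X]) :
    (polyWeight fun j => q.comp (C (a j) * X)) = n * q.support.card := by
  have hsupp (j : Fin n) : (q.comp (C (a j) * X)).support = q.support := by
    ext i
    simp [comp_C_mul_X_coeff, ha j]
  simp [polyWeight, hsupp]

lemma freeDist_le_polyWeight {M : Submodule F[X] (Fin n → F[X])} {c : Fin n → F[X]} (hc : c ∈ M)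
    (hc0 : c ≠ 0) : freeDist M ≤ polyWeight c :=
  Nat.sInf_le ⟨c, hc, hc0, rfl⟩

lemma le_freeDist {M : Submodule F[X] (Fin n → F[X])} (hM : M ≠ ⊥) {d : ℕ}
    (h : ∀ c ∈ M, c ≠ 0 → d ≤ polyWeight c) : d ≤ freeDist M := by
  obtain ⟨c, hc, hc0⟩ := M.exists_mem_ne_zero_of_ne_bot hM
  refine le_csInf ⟨_, c, hc, hc0, rfl⟩ ?_
  rintro _ ⟨c, hc, hc0, rfl⟩
  exact h c hc hc0

end Weight

lemma sum_range_tsub_add_sum_range_tsub (m l : ℕ) :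
    ∑ k ∈ Finset.range m, (k - l) + ∑ r ∈ Finset.range l, (m + r - l) =
      ∑ k ∈ Finset.range m, k := by
  have hzero : ∑ k ∈ Finset.range l, (k - l) = 0 :=
    Finset.sum_eq_zero fun k hk => Nat.sub_eq_zero_of_le (Finset.mem_range.1 hk).le
  rw [← Finset.sum_range_add (· - l), add_comm m, Finset.sum_range_add, hzero, zero_add]
  simp only [Nat.add_sub_cancel_left]

section ScaledMultiples

variable {F : Type*} [Field F] {n : ℕ} {a : Fin n → F} {p q : F[X]}

lemma le_hammingWt_columnPoly_add_min (ha : ∀ j, a j ≠ 0) (hinj : Function.Injective a)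
    (hp : p.coeff 0 ≠ 0) {k : ℕ} (hq : q.coeff k ≠ 0) :
    n ≤ hammingWt (fun j => (columnPoly p q k).eval (a j)) + min k p.natDegree := by
  have hne : columnPoly p q k ≠ 0 :=
    columnPoly_ne_zero p q le_rfl (by simpa using ⟨hq, hp⟩)
  have := le_hammingWt_eval_add ha hinj hne
  have := natDegree_columnPoly_le p q k
  have := sub_natDegree_le_natTrailingDegree_columnPoly hne
  omega

lemma le_hammingWt_columnPoly_natDegree_add (ha : ∀ j, a j ≠ 0) (hinj : Function.Injective a)
    (hp : p ≠ 0) {i : ℕ} (hq : q.coeff i ≠ 0) :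
    n ≤ hammingWt (fun j => (columnPoly p q (p.natDegree + i)).eval (a j)) +
      (q.natDegree - i) := by
  have hne : columnPoly p q (p.natDegree + i) ≠ 0 :=
    columnPoly_ne_zero p q (Nat.le_add_left _ _) (by simpa using ⟨hq, hp⟩)
  have := le_hammingWt_eval_add ha hinj hne
  have := natDegree_columnPoly_le p q (p.natDegree + i)
  have := sub_natDegree_le_natTrailingDegree_columnPoly hne
  omega

lemma le_polyWeight_smul_of_coeff_zero_ne_zero (ha : ∀ j, a j ≠ 0) (hinj : Function.Injective a)
    (hqn : q.natDegree ≤ n) (hq : ∀ i ≤ q.natDegree, q.coeff i ≠ 0) (hp : p.coeff 0 ≠ 0) :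
    n * (q.natDegree + 1) ≤ polyWeight (p • fun j => q.comp (C (a j) * X)) := by
  set δ := q.natDegree
  set l := p.natDegree
  let W (k : ℕ) : ℕ := hammingWt fun j => (columnPoly p q k).eval (a j)
  have hlow : ∀ k ∈ Finset.range (δ + 1), n + (k - l) ≤ W k + k := fun k hk => by
    have : n ≤ W k + min k l :=
      le_hammingWt_columnPoly_add_min ha hinj hp (hq k (Finset.mem_range_succ_iff.1 hk))
    omega
  have hhigh : ∀ r ∈ Finset.range l, δ + 1 + r - l ≤ W (δ + 1 + r) := fun r hr => by
    have hr := Finset.mem_range.1 hr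
    rcases le_total (δ + 1 + r) l with hle | hle
    · simp [Nat.sub_eq_zero_of_le hle]
    · obtain ⟨i, hi⟩ := Nat.exists_eq_add_of_le hle
      have hp0 : p ≠ 0 := fun h => hp (by simp [h])
      have : n ≤ W (l + i) + (δ - i) :=
        le_hammingWt_columnPoly_natDegree_add ha hinj hp0 (hq i (by omega))
      rw [hi]
      omega
  have hcolumns : ∑ k ∈ Finset.range (δ + 1 + l), W k ≤
      polyWeight (p • fun j => q.comp (C (a j) * X)) := by
    simpa only [W, eval_columnPoly, Pi.smul_apply, smul_eq_mul] using
      sum_hammingWt_coeff_le_polyWeight (p • fun j => q.comp (C (a j) * X)) (δ + 1 + l)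
  have hsum := add_le_add (Finset.sum_le_sum hlow) (Finset.sum_le_sum hhigh)
  have hshift := sum_range_tsub_add_sum_range_tsub (δ + 1) l
  simp only [Finset.sum_add_distrib, Finset.sum_const, Finset.card_range, smul_eq_mul] at hsum
  rw [Finset.sum_range_add] at hcolumns
  rw [mul_comm]
  omega

lemma le_polyWeight_smul (ha : ∀ j, a j ≠ 0) (hinj : Function.Injective a)
    (hqn : q.natDegree ≤ n) (hq : ∀ i ≤ q.natDegree, q.coeff i ≠ 0) (hp : p ≠ 0) :
    n * (q.natDegree + 1) ≤ polyWeight (p • fun j => q.comp (C (a j) * X)) := by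
  obtain ⟨r, hr⟩ : X ^ p.natTrailingDegree ∣ p :=
    X_pow_dvd_iff.2 fun _ => coeff_eq_zero_of_lt_natTrailingDegree
  have hr0 : r.coeff 0 ≠ 0 := by
    have hcoeff := coeff_X_pow_mul r p.natTrailingDegree 0
    rw [← hr, zero_add] at hcoeff
    rw [← hcoeff]
    exact coeff_natTrailingDegree_ne_zero.2 hp
  rw [hr, mul_smul, polyWeight_X_pow_smul]
  exact le_polyWeight_smul_of_coeff_zero_ne_zero ha hinj hqn hq hr0

end ScaledMultiples

section GoppaCode

variable {F : Type*} [Field F]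

lemma goppaCode_eq_span_taylor {n : ℕ} (a : Fin n → F) (b : F) (s : F[X]) :
    goppaCode a b s = Submodule.span F[X] {fun j => (taylor b s).comp (C (a j) * X)} := by
  simp [goppaCode, taylor_apply, comp_assoc]

lemma freeDist_span_comp_eq_iff {n δ : ℕ} (hn : n ≠ 0) (hδ : δ ≤ n) {a : Fin n → F}
    (ha : ∀ j, a j ≠ 0) (hinj : Function.Injective a) {q : F[X]} (hq : q ≠ 0)
    (hdeg : q.natDegree ≤ δ) :
    freeDist (Submodule.span F[X] {fun j => q.comp (C (a j) * X)}) = n * (δ + 1) ↔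
      ∀ i ≤ δ, q.coeff i ≠ 0 := by
  set g : Fin n → F[X] := fun j => q.comp (C (a j) * X)
  have hsupp : q.support ⊆ Finset.range (δ + 1) := fun i hi =>
    Finset.mem_range_succ_iff.2 ((le_natDegree_of_mem_supp i hi).trans hdeg)
  have hg : g ≠ 0 := fun h => by
    have hweight : polyWeight g = n * q.support.card := polyWeight_comp_C_mul_X ha q
    rw [h] at hweight
    simp [polyWeight, hn, hq] at hweight
  have hle : freeDist (Submodule.span F[X] {g}) ≤ n * q.support.card :=
    (freeDist_le_polyWeight (Submodule.mem_span_singleton_self g) hg).trans_eq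
      (polyWeight_comp_C_mul_X ha q)
  constructor
  · intro h i hi
    have hcard : δ + 1 ≤ q.support.card :=
      Nat.le_of_mul_le_mul_left (h ▸ hle) (Nat.pos_of_ne_zero hn)
    have hfull : q.support = Finset.range (δ + 1) :=
      Finset.eq_of_subset_of_card_le hsupp (by simpa using hcard)
    exact mem_support_iff.1 (hfull ▸ Finset.mem_range_succ_iff.2 hi)
  · intro h
    obtain rfl : q.natDegree = δ := hdeg.antisymm (le_natDegree_of_ne_zero (h δ le_rfl))
    refine le_antisymm (hle.trans (Nat.mul_le_mul_left n ?_)) (le_freeDist ?_ fun c hc hc0 => ?_)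
    · simpa using Finset.card_le_card hsupp
    · simpa using hg
    · obtain ⟨p, rfl⟩ := Submodule.mem_span_singleton.1 hc
      exact le_polyWeight_smul ha hinj hδ h (left_ne_zero_of_smul hc0)

lemma freeDist_goppaCode_eq_iff {n δ : ℕ} (hn : n ≠ 0) (hδ : δ ≤ n) {a : Fin n → F}
    (ha : ∀ j, a j ≠ 0) (hinj : Function.Injective a) (b : F) {s : F[X]} (hs : s ≠ 0)
    (hdeg : s.natDegree ≤ δ) :
    freeDist (goppaCode a b s) = n * (δ + 1) ↔ ∀ i ≤ δ, (hasseDeriv i s).eval b ≠ 0 := by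
  simp_rw [goppaCode_eq_span_taylor, ← taylor_coeff]
  exact freeDist_span_comp_eq_iff hn hδ ha hinj (mt (taylor_eq_zero b s).1 hs)
    ((natDegree_taylor s b).trans_le hdeg)

end GoppaCode

lemma exists_natDegree_le_forall_eval_hasseDeriv_ne_zero {R : Type*} [CommRing R] [Nontrivial R]
    (b : R) (δ : ℕ) :
    ∃ s : R[X], s.natDegree ≤ δ ∧ ∀ i ≤ δ, (hasseDeriv i s).eval b ≠ 0 := by
  refine ⟨taylor (-b) (∑ k ∈ Finset.range (δ + 1), X ^ k), ?_, fun i hi => ?_⟩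
  · rw [natDegree_taylor]
    exact natDegree_sum_le_of_forall_le _ _ fun k hk =>
      (natDegree_X_pow_le k).trans (Finset.mem_range_succ_iff.1 hk)
  · rw [← taylor_coeff, taylor_taylor, add_neg_cancel, taylor_zero]
    simp [coeff_X_pow, Nat.lt_succ_of_le hi]

theorem goppa_MDS_locus_eq_and_nonempty_general {F : Type*} [Field F] {n δ : ℕ} (hn : n ≠ 0)
    (hδ : δ ≤ n) (a : Fin n → F) (ha : ∀ i, a i ≠ 0) (hinj : Function.Injective a) (b : F) :
    {lam : Fin (δ + 1) → F | lam ≠ 0 ∧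
        freeDist (goppaCode a b (∑ i : Fin (δ + 1), C (lam i) * X ^ (i : ℕ))) = n * (δ + 1)} =
      {lam : Fin (δ + 1) → F | lam ≠ 0 ∧ ∀ j : Fin (δ + 1),
        (hasseDeriv (j : ℕ) (∑ i : Fin (δ + 1), C (lam i) * X ^ (i : ℕ))).eval b ≠ 0} ∧
    {lam : Fin (δ + 1) → F | lam ≠ 0 ∧
        freeDist (goppaCode a b (∑ i : Fin (δ + 1), C (lam i) * X ^ (i : ℕ))) =
          n * (δ + 1)}.Nonempty := by
  classical
  simp_rw [C_mul_X_pow_eq_monomial, ← ofFn_eq_sum_monomial]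
  have hlocus (lam : Fin (δ + 1) → F) (hlam : lam ≠ 0) :
      freeDist (goppaCode a b (ofFn (δ + 1) lam)) = n * (δ + 1) ↔
        ∀ j : Fin (δ + 1), (hasseDeriv (j : ℕ) (ofFn (δ + 1) lam)).eval b ≠ 0 := by
    have hs : ofFn (δ + 1) lam ≠ 0 := by
      simpa using (injective_ofFn (δ + 1)).ne hlam
    have hdeg := Nat.le_of_lt_succ (ofFn_natDegree_lt (Nat.succ_pos δ) lam)
    rw [freeDist_goppaCode_eq_iff hn hδ ha hinj b hs hdeg, Fin.forall_iff]
    simp only [Nat.lt_succ_iff]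
  have heq := Set.ext fun lam : Fin (δ + 1) → F => and_congr_right (hlocus lam)
  refine ⟨heq, ?_⟩
  obtain ⟨s, hdeg, hderiv⟩ := exists_natDegree_le_forall_eval_hasseDeriv_ne_zero b δ
  have hofFn : ofFn (δ + 1) (toFn (δ + 1) s) = s :=
    ofFn_comp_toFn_eq_id_of_natDegree_lt (Nat.lt_succ_of_le hdeg)
  rw [heq]
  refine ⟨toFn (δ + 1) s, fun h => hderiv 0 (Nat.zero_le δ) ?_, fun j => ?_⟩
  · rw [← hofFn, h, map_zero, map_zero, eval_zero]
  · rw [hofFn]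
    exact hderiv j (Nat.le_of_lt_succ j.2)

/-- In the family of 1-dimensional convolutional Goppa codes
`C_λ = ⟨(s_λ(a₁z+b), …, s_λ(a_nz+b))⟩`, the set of nonzero parameters `λ` giving an MDS
code coincides with the set of nonzero `λ` with all Hasse derivatives `s_λ^{(j)}(b) ≠ 0`
for `0 ≤ j ≤ δ`, and this set is non-empty. -/
theorem goppa_MDS_locus_eq_and_nonempty {F : Type*} [Field F] [Fintype F] {n δ : ℕ}
    (hδ : δ < n)
    (a : Fin n → F) (ha : ∀ i, a i ≠ 0) (hinj : Function.Injective a) (b : F) :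
    {lam : Fin (δ + 1) → F | lam ≠ 0 ∧
        freeDist (Submodule.span (Polynomial F)
          {fun j : Fin n =>
            (∑ i : Fin (δ + 1), Polynomial.C (lam i) * Polynomial.X ^ (i : ℕ)).comp
              (Polynomial.C (a j) * Polynomial.X + Polynomial.C b)}) = n * (δ + 1)} =
      {lam : Fin (δ + 1) → F | lam ≠ 0 ∧ ∀ j : Fin (δ + 1),
        (Polynomial.hasseDeriv (j : ℕ)
          (∑ i : Fin (δ + 1), Polynomial.C (lam i) * Polynomial.X ^ (i : ℕ))).eval b ≠ 0} ∧
    {lam : Fin (δ + 1) → F | lam ≠ 0 ∧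
        freeDist (Submodule.span (Polynomial F)
          {fun j : Fin n =>
            (∑ i : Fin (δ + 1), Polynomial.C (lam i) * Polynomial.X ^ (i : ℕ)).comp
              (Polynomial.C (a j) * Polynomial.X + Polynomial.C b)}) = n * (δ + 1)}.Nonempty :=
  goppa_MDS_locus_eq_and_nonempty_general (by omega) hδ.le a ha hinj b
end

section
/- Let 𝔽 be a finite field and let C be a convolutional code of type [n,1,2] with canonical generator matrix 𝒢(z) = (𝒢₁(z),…,𝒢_n(z)) = G₀ + G₁z + G₂z², such that the stacked 3×n matrix (G₂; G₁; G₀) has rank 3; let μ be the minimum distance of the block code it spans and l(C) = ⌊3n/μ⌋ − 3. Let 𝓕(z) = F₀ + F₁z + F₂z² ∈ 𝔽[z] and let C̃ be the code of length n+1 generated by 𝒢̃(z) = (𝒢₁(z),…,𝒢_n(z), 𝓕(z)); assume its stacked 3×(n+1) matrix also has rank 3, with associated block-code distance μ̃ and l(C̃) = ⌊3(n+1)/μ̃⌋ − 3. For k ≥ 0 let 𝓕_k be the (k+1)×(k+3) matrix whose i-th row is (0,…,0,F₀,F₁,F₂,0,…,0) with F₀ in column i, and let d(𝓕_k) be the minimum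 Hamming weight of a nonzero 𝔽-linear combination of its rows. Set k₀ = max{l(C̃), l(C)}. If 𝓕_{k₀} has maximal rank k₀+1, then d_free(C̃) ≥ d_free(C) + d(𝓕_k) for every k ≥ k₀. -/
open Polynomial

/-- Append an entry to a row vector of polynomials. -/
noncomputable def snocRow {F : Type*} [Field F] {n : ℕ}
    (G : Fin n → Polynomial F) (f : Polynomial F) : Fin (n + 1) → Polynomial F :=
  Fin.snoc G f

/-!
Take a minimal-weight codeword `α • H` of a degree-`δ` code and look at its coefficient vectors at
`z ^ 0, …, z ^ (deg α + δ)`, all of which lie in the block code spanned by the coefficients of `H`.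
If one of them vanishes then, the coefficients of `H` being independent, `δ + 1` consecutive
coefficients of `α` vanish. The codeword thus splits into two parts with disjoint supports, and
keeping only the later part gives an input of smaller degree whose weight is no larger. So we may
assume that each of the `deg α + δ + 1` coefficient vectors has weight at least `μ`, while the total
is at most the weight of `H`: this bounds `deg α`. For such an input `α` of the extended code, the
first `n` entries of the codeword contribute at least the free distance of the original code, and
the last entry `α * f` is a combination of the rows of the sliding matrix.
-/

section PolynomialCoefficients

theorem mul_eq_sum_coeff_smul {R : Type*} [CommSemiring R] (p : R[X]) {q : R[X]} {n : ℕ}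
    (hq : q.natDegree < n) : p * q = ∑ i : Fin n, q.coeff i • (p * X ^ (i : ℕ)) := by
  conv_lhs => rw [q.as_sum_range_C_mul_X_pow' hq, Finset.mul_sum, ← Fin.sum_univ_eq_sum_range
    (fun i => p * (C (q.coeff i) * X ^ i))]
  simp only [smul_eq_C_mul, mul_left_comm]

theorem toFn_ne_zero_of_natDegree_lt {R : Type*} [Semiring R] {p : R[X]} {N : ℕ} (hp : p ≠ 0)
    (hN : p.natDegree < N) : toFn N p ≠ 0 := by
  classical
  intro h
  exact hp (by rw [← ofFn_comp_toFn_eq_id_of_natDegree_lt hN, h, map_zero])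

variable {R : Type*} [Ring R]

theorem coeff_modByMonic_X_pow (p : R[X]) (n i : ℕ) :
    (p %ₘ X ^ n).coeff i = if i < n then p.coeff i else 0 := by
  nontriviality R
  split_ifs with hi
  · conv_rhs => rw [← modByMonic_add_div p (X ^ n)]
    rw [coeff_add, coeff_X_pow_mul', if_neg hi.not_ge, add_zero]
  · refine coeff_eq_zero_of_degree_lt ((degree_modByMonic_lt p (monic_X_pow n)).trans_le ?_)
    rw [degree_X_pow]
    exact_mod_cast not_lt.mp hi

theorem coeff_divByMonic_X_pow_mul {α p : R[X]} {δ t : ℕ} (hp : p.natDegree ≤ δ)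
    (hα : ∀ s ≤ t, t ≤ s + δ → α.coeff s = 0) (r : ℕ) :
    (α /ₘ X ^ (t + 1) * p).coeff r = (α * p).coeff (r + (t + 1)) := by
  have hlow : (α %ₘ X ^ (t + 1) * p).coeff (r + (t + 1)) = 0 := by
    rw [coeff_mul]
    refine Finset.sum_eq_zero fun ⟨a, b⟩ hab => ?_
    rw [Finset.HasAntidiagonal.mem_antidiagonal] at hab
    rcases lt_or_ge δ b with hb | hb
    · rw [coeff_eq_zero_of_natDegree_lt (hp.trans_lt hb), mul_zero]
    · rw [coeff_modByMonic_X_pow]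
      split_ifs with ha
      · rw [hα a (by omega) (by omega), zero_mul]
      · exact zero_mul _
  calc (α /ₘ X ^ (t + 1) * p).coeff r
      = (X ^ (t + 1) * (α /ₘ X ^ (t + 1) * p)).coeff (r + (t + 1)) := (coeff_X_pow_mul _ _ _).symm
    _ = ((α %ₘ X ^ (t + 1) + X ^ (t + 1) * (α /ₘ X ^ (t + 1))) * p).coeff (r + (t + 1)) := by
      rw [add_mul, coeff_add, hlow, zero_add, mul_assoc]
    _ = (α * p).coeff (r + (t + 1)) := by rw [modByMonic_add_div]

theorem card_support_divByMonic_X_pow_mul_le {α p : R[X]} {δ t : ℕ} (hp : p.natDegree ≤ δ)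
    (hα : ∀ s ≤ t, t ≤ s + δ → α.coeff s = 0) :
    (α /ₘ X ^ (t + 1) * p).support.card ≤ (α * p).support.card :=
  Finset.card_le_card_of_injOn (· + (t + 1))
    (fun r hr => by simpa [coeff_divByMonic_X_pow_mul hp hα] using hr)
    (add_left_injective (t + 1)).injOn

end PolynomialCoefficients

section BlockCode

variable {F : Type*} [Field F] {n : ℕ}

theorem hammingWt_eq_hammingNorm [DecidableEq F] (v : Fin n → F) :
    hammingWt v = hammingNorm v := by
  rw [hammingWt, hammingNorm, ← Set.ncard_coe_finset, Finset.coe_filter_univ]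

theorem hammingWt_pos {v : Fin n → F} (hv : v ≠ 0) : 0 < hammingWt v := by
  classical
  rwa [hammingWt_eq_hammingNorm, hammingNorm_pos_iff]

theorem sum_hammingWt_comm {m : ℕ} (A : Fin m → Fin n → F) :
    ∑ i, hammingWt (A i) = ∑ j, hammingWt fun i => A i j := by
  classical
  simp only [hammingWt_eq_hammingNorm, hammingNorm, Finset.card_filter]
  exact Finset.sum_comm

theorem hammingWt_toFn_le_card_support (p : F[X]) : hammingWt (toFn n p) ≤ p.support.card := by
  classical
  rw [hammingWt_eq_hammingNorm]
  exact Finset.card_le_card_of_injOn Fin.val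
    (fun i hi => by simpa [toFn] using (Finset.mem_filter.mp hi).2) Fin.val_injective.injOn

variable {C : Submodule F (Fin n → F)}

theorem minDist_le_hammingWt {v : Fin n → F} (hv : v ∈ C) (hv0 : v ≠ 0) :
    minDist C ≤ hammingWt v :=
  Nat.sInf_le ⟨v, hv, hv0, rfl⟩

theorem minDist_pos (hC : C ≠ ⊥) : 0 < minDist C := by
  obtain ⟨v, hv, hv0⟩ := C.exists_mem_ne_zero_of_ne_bot hC
  obtain ⟨w, -, hw0, hw⟩ : minDist C ∈ {d | ∃ v ∈ C, v ≠ 0 ∧ hammingWt v = d} :=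
    Nat.sInf_mem ⟨_, v, hv, hv0, rfl⟩
  exact hw ▸ hammingWt_pos hw0

end BlockCode

section ConvolutionalCode

variable {F : Type*} [Field F] {m : ℕ}

/-- The vector coefficient of `z ^ t` in a vector of polynomials; for a generator row
`𝒢(z) = ∑ Gₜ zᵗ` this is `Gₜ`. -/
def coeffVec (c : Fin m → F[X]) (t : ℕ) : Fin m → F :=
  fun j => (c j).coeff t

/-- The block code spanned by the coefficient vectors `G₀, …, G_δ` of a generator row of degree at
most `δ`. Its minimum distance is the `μ` of the bound `⌊(δ + 1) m / μ⌋ - (δ + 1)`. -/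
def coeffCode (H : Fin m → F[X]) (δ : ℕ) : Submodule F (Fin m → F) :=
  Submodule.span F (Set.range fun d : Fin (δ + 1) => coeffVec H d)

theorem coeffVec_smul {H : Fin m → F[X]} {δ : ℕ} (hH : ∀ j, (H j).natDegree ≤ δ) (α : F[X])
    (t : ℕ) :
    coeffVec (α • H) t = ∑ d : Fin (δ + 1), (α * X ^ (d : ℕ)).coeff t • coeffVec H d := by
  ext j
  simp [coeffVec, mul_eq_sum_coeff_smul α (Nat.lt_succ_of_le (hH j)), mul_comm]

theorem coeffVec_smul_mem_coeffCode {H : Fin m → F[X]} {δ : ℕ} (hH : ∀ j, (H j).natDegree ≤ δ)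
    (α : F[X]) (t : ℕ) : coeffVec (α • H) t ∈ coeffCode H δ := by
  rw [coeffVec_smul hH]
  exact Submodule.sum_smul_mem _ _ fun d _ => Submodule.subset_span ⟨d, rfl⟩

theorem sum_hammingWt_coeffVec_le_polyWeight (c : Fin m → F[X]) (N : ℕ) :
    ∑ t : Fin N, hammingWt (coeffVec c t) ≤ polyWeight c :=
  calc ∑ t : Fin N, hammingWt (coeffVec c t)
      = ∑ j, hammingWt (toFn N (c j)) := sum_hammingWt_comm fun t : Fin N => coeffVec c t
    _ ≤ polyWeight c := Finset.sum_le_sum fun j _ => hammingWt_toFn_le_card_support (c j)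

theorem mul_minDist_coeffCode_le_polyWeight {H : Fin m → F[X]} {δ : ℕ}
    (hH : ∀ j, (H j).natDegree ≤ δ) {α : F[X]} {N : ℕ} (hα : ∀ t < N, coeffVec (α • H) t ≠ 0) :
    N * minDist (coeffCode H δ) ≤ polyWeight (α • H) :=
  calc N * minDist (coeffCode H δ)
      = ∑ _t : Fin N, minDist (coeffCode H δ) := by simp
    _ ≤ ∑ t : Fin N, hammingWt (coeffVec (α • H) t) := Finset.sum_le_sum fun t _ =>
        minDist_le_hammingWt (coeffVec_smul_mem_coeffCode hH α t) (hα t t.isLt)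
    _ ≤ polyWeight (α • H) := sum_hammingWt_coeffVec_le_polyWeight _ _

theorem polyWeight_le_mul {H : Fin m → F[X]} {δ : ℕ} (hH : ∀ j, (H j).natDegree ≤ δ) :
    polyWeight H ≤ (δ + 1) * m :=
  calc polyWeight H
      ≤ ∑ _j : Fin m, (δ + 1) := Finset.sum_le_sum fun j _ =>
        (card_supp_le_succ_natDegree (H j)).trans (Nat.succ_le_succ (hH j))
    _ = (δ + 1) * m := by simp [mul_comm]

theorem freeDist_span_singleton_le {H : Fin m → F[X]} (hH0 : H ≠ 0) {α : F[X]} (hα : α ≠ 0) :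
    freeDist (Submodule.span F[X] {H}) ≤ polyWeight (α • H) :=
  Nat.sInf_le ⟨α • H, Submodule.smul_mem _ _ (Submodule.mem_span_singleton_self H),
    smul_ne_zero hα hH0, rfl⟩

theorem exists_polyWeight_smul_eq_freeDist {H : Fin m → F[X]} (hH0 : H ≠ 0) :
    ∃ α : F[X], α ≠ 0 ∧ polyWeight (α • H) = freeDist (Submodule.span F[X] {H}) := by
  obtain ⟨c, hc, hc0, hcw⟩ : freeDist (Submodule.span F[X] {H}) ∈
      {d | ∃ c ∈ Submodule.span F[X] {H}, c ≠ 0 ∧ polyWeight c = d} :=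
    Nat.sInf_mem ⟨_, H, Submodule.mem_span_singleton_self H, hH0, rfl⟩
  obtain ⟨α, rfl⟩ := Submodule.mem_span_singleton.mp hc
  exact ⟨α, left_ne_zero_of_smul hc0, hcw⟩

section DegreeBound

variable {H : Fin m → F[X]} {δ : ℕ}

theorem coeff_eq_zero_of_coeffVec_smul_eq_zero (hH : ∀ j, (H j).natDegree ≤ δ)
    (hli : LinearIndependent F fun d : Fin (δ + 1) => coeffVec H d) {α : F[X]} {t : ℕ}
    (h0 : coeffVec (α • H) t = 0) {s : ℕ} (hst : s ≤ t) (hts : t ≤ s + δ) : α.coeff s = 0 := by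
  rw [coeffVec_smul hH] at h0
  have hcoeff := Fintype.linearIndependent_iff.mp hli _ h0 ⟨t - s, by omega⟩
  rwa [coeff_mul_X_pow', if_pos (Nat.sub_le t s), Nat.sub_sub_self hst] at hcoeff

theorem exists_natDegree_lt_polyWeight_smul_le (hH : ∀ j, (H j).natDegree ≤ δ)
    (hli : LinearIndependent F fun d : Fin (δ + 1) => coeffVec H d) {α : F[X]} (hα : α ≠ 0)
    {t : ℕ} (ht : t ≤ α.natDegree + δ) (h0 : coeffVec (α • H) t = 0) :
    ∃ γ : F[X], γ ≠ 0 ∧ γ.natDegree < α.natDegree ∧ polyWeight (γ • H) ≤ polyWeight (α • H) := by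
  have hwindow : ∀ s ≤ t, t ≤ s + δ → α.coeff s = 0 := fun s hst hts =>
    coeff_eq_zero_of_coeffVec_smul_eq_zero hH hli h0 hst hts
  have htα : t < α.natDegree := by
    by_contra! hαt
    exact leadingCoeff_ne_zero.mpr hα (hwindow _ hαt ht)
  refine ⟨α /ₘ X ^ (t + 1), ?_, ?_, Finset.sum_le_sum fun j _ =>
    card_support_divByMonic_X_pow_mul_le (hH j) hwindow⟩
  · rw [Ne, divByMonic_eq_zero_iff (monic_X_pow _), degree_X_pow, not_lt, degree_eq_natDegree hα]
    exact_mod_cast htα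
  · rw [natDegree_divByMonic _ (monic_X_pow _), natDegree_X_pow]
    omega

theorem exists_polyWeight_smul_le_forall_coeffVec_ne_zero (hH : ∀ j, (H j).natDegree ≤ δ)
    (hli : LinearIndependent F fun d : Fin (δ + 1) => coeffVec H d) {α : F[X]} (hα : α ≠ 0) :
    ∃ β : F[X], β ≠ 0 ∧ polyWeight (β • H) ≤ polyWeight (α • H) ∧
      ∀ t ≤ β.natDegree + δ, coeffVec (β • H) t ≠ 0 := by
  induction hd : α.natDegree using Nat.strong_induction_on generalizing α with
  | _ d ih =>
    by_cases h : ∀ t ≤ α.natDegree + δ, coeffVec (α • H) t ≠ 0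
    · exact ⟨α, hα, le_rfl, h⟩
    · push Not at h
      obtain ⟨t, ht, h0⟩ := h
      obtain ⟨γ, hγ, hγα, hγw⟩ := exists_natDegree_lt_polyWeight_smul_le hH hli hα ht h0
      obtain ⟨β, hβ, hβw, hβ0⟩ := ih _ (hd ▸ hγα) hγ rfl
      exact ⟨β, hβ, hβw.trans hγw, hβ0⟩

theorem exists_natDegree_le_polyWeight_smul_eq_freeDist (hH : ∀ j, (H j).natDegree ≤ δ)
    (hli : LinearIndependent F fun d : Fin (δ + 1) => coeffVec H d) :
    ∃ α : F[X], α ≠ 0 ∧ α.natDegree ≤ (δ + 1) * m / minDist (coeffCode H δ) - (δ + 1) ∧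
      polyWeight (α • H) = freeDist (Submodule.span F[X] {H}) := by
  have hH0 : H ≠ 0 := by
    rintro rfl
    exact hli.ne_zero 0 rfl
  have hpos : 0 < minDist (coeffCode H δ) := minDist_pos fun hbot =>
    hli.ne_zero 0 (Submodule.span_eq_bot.mp hbot _ ⟨0, rfl⟩)
  obtain ⟨α, hα, hαw⟩ := exists_polyWeight_smul_eq_freeDist hH0
  obtain ⟨β, hβ, hβα, hβ0⟩ := exists_polyWeight_smul_le_forall_coeffVec_ne_zero hH hli hα
  have hβw : polyWeight (β • H) = freeDist (Submodule.span F[X] {H}) :=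
    le_antisymm (hβα.trans_eq hαw) (freeDist_span_singleton_le hH0 hβ)
  have hmul : (β.natDegree + (δ + 1)) * minDist (coeffCode H δ) ≤ (δ + 1) * m :=
    calc (β.natDegree + (δ + 1)) * minDist (coeffCode H δ)
        ≤ polyWeight (β • H) := mul_minDist_coeffCode_le_polyWeight hH
          fun t ht => hβ0 t (Nat.lt_succ_iff.mp ht)
      _ ≤ polyWeight ((1 : F[X]) • H) := hβw.trans_le (freeDist_span_singleton_le hH0 one_ne_zero)
      _ ≤ (δ + 1) * m := by rw [one_smul]; exact polyWeight_le_mul hH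
  exact ⟨β, hβ, Nat.le_sub_of_add_le ((Nat.le_div_iff_mul_le hpos).mpr hmul), hβw⟩

end DegreeBound

end ConvolutionalCode

section SlidingMatrix

variable {F : Type*} [Field F]

/-- The `i`-th row of the sliding matrix `𝓕_k` of a polynomial `f` of degree at most `δ`: the
coefficients of `f` shifted `i` places to the right, encoded as those of `z ^ i f(z)`. -/
noncomputable def slidingRow (f : F[X]) (δ k : ℕ) (i : Fin (k + 1)) : Fin (k + δ + 1) → F :=
  toFn (k + δ + 1) (f * X ^ (i : ℕ))

/-- The block code spanned by the rows of `𝓕_k`; its minimum distance is `d(𝓕_k)`. -/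
noncomputable def slidingCode (f : F[X]) (δ k : ℕ) : Submodule F (Fin (k + δ + 1) → F) :=
  Submodule.span F (Set.range (slidingRow f δ k))

theorem slidingRow_quadratic (a b c : F) (k : ℕ) :
    slidingRow (C a + C b * X + C c * X ^ 2) 2 k = fun (i : Fin (k + 1)) (j : Fin (k + 3)) =>
      if (j : ℕ) = (i : ℕ) then a else if (j : ℕ) = (i : ℕ) + 1 then b
        else if (j : ℕ) = (i : ℕ) + 2 then c else 0 := by
  ext i j
  simp only [slidingRow, toFn, LinearMap.pi_apply, lcoeff_apply, coeff_mul_X_pow', coeff_add,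
    coeff_C, coeff_C_mul, coeff_X]
  split_ifs <;> first | omega | simp

theorem ne_zero_of_linearIndependent_slidingRow {f : F[X]} {δ k : ℕ}
    (hli : LinearIndependent F (slidingRow f δ k)) : f ≠ 0 := by
  rintro rfl
  exact hli.ne_zero 0 (by rw [slidingRow, zero_mul, map_zero])

theorem toFn_mul_mem_slidingCode {α : F[X]} {k : ℕ} (hα : α.natDegree ≤ k) (f : F[X]) (δ : ℕ) :
    toFn (k + δ + 1) (α * f) ∈ slidingCode f δ k := by
  rw [mul_comm, mul_eq_sum_coeff_smul f (Nat.lt_succ_of_le hα), map_sum]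
  simp only [map_smul]
  exact Submodule.sum_smul_mem _ _ fun i _ => Submodule.subset_span ⟨i, rfl⟩

theorem minDist_slidingCode_le_card_support {α f : F[X]} {δ k : ℕ} (hα : α.natDegree ≤ k)
    (hf : f.natDegree ≤ δ) (h0 : α * f ≠ 0) :
    minDist (slidingCode f δ k) ≤ (α * f).support.card := by
  have hdeg : (α * f).natDegree < k + δ + 1 :=
    Nat.lt_succ_of_le (natDegree_mul_le_of_le hα hf)
  exact (minDist_le_hammingWt (toFn_mul_mem_slidingCode hα f δ)
    (toFn_ne_zero_of_natDegree_lt h0 hdeg)).trans (hammingWt_toFn_le_card_support _)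

end SlidingMatrix

section Extension

variable {F : Type*} [Field F] {n : ℕ}

theorem polyWeight_smul_snocRow (α : F[X]) (G : Fin n → F[X]) (f : F[X]) :
    polyWeight (α • snocRow G f) = polyWeight (α • G) + (α * f).support.card := by
  simp [polyWeight, snocRow, Fin.sum_univ_castSucc]

theorem natDegree_snocRow_le {G : Fin n → F[X]} {f : F[X]} {δ : ℕ}
    (hG : ∀ j, (G j).natDegree ≤ δ) (hf : f.natDegree ≤ δ) (j : Fin (n + 1)) :
    (snocRow G f j).natDegree ≤ δ := by
  cases j using Fin.lastCases with
  | last => simpa [snocRow] using hf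
  | cast i => simpa [snocRow] using hG i

theorem freeDist_extension_lower_bound_general {G : Fin n → F[X]} {f : F[X]} {δ k : ℕ}
    (hG0 : G ≠ 0) (hf0 : f ≠ 0) (hG : ∀ j, (G j).natDegree ≤ δ) (hf : f.natDegree ≤ δ)
    (hli : LinearIndependent F fun d : Fin (δ + 1) => coeffVec (snocRow G f) d)
    (hk : (δ + 1) * (n + 1) / minDist (coeffCode (snocRow G f) δ) - (δ + 1) ≤ k) :
    freeDist (Submodule.span F[X] {G}) + minDist (slidingCode f δ k) ≤
      freeDist (Submodule.span F[X] {snocRow G f}) := by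
  obtain ⟨α, hα, hαk, hαw⟩ :=
    exists_natDegree_le_polyWeight_smul_eq_freeDist (natDegree_snocRow_le hG hf) hli
  rw [← hαw, polyWeight_smul_snocRow]
  exact add_le_add (freeDist_span_singleton_le hG0 hα)
    (minDist_slidingCode_le_card_support (hαk.trans hk) hf (mul_ne_zero hα hf0))

end Extension

theorem linearIndependent_row_of_rank_eq_card {K m n : Type*} [Field K] [Fintype m] [Fintype n]
    {A : Matrix m n K} (hA : A.rank = Fintype.card m) : LinearIndependent K A.row :=
  linearIndependent_iff_card_eq_finrank_span.mpr (hA.symm.trans A.rank_eq_finrank_span_row)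

/-- Let `C` be a convolutional code of type `[n,1,2]` with canonical
generator matrix `𝒢(z) = G₀ + G₁z + G₂z²` whose stacked `3 × n` coefficient matrix has
rank `3`, and let `C̃` be the length-`(n+1)` code obtained by appending the polynomial
`𝓕(z) = F₀ + F₁z + F₂z²`, whose stacked `3 × (n+1)` matrix also has rank `3`. With
`l(C) = ⌊3n/μ⌋ − 3`, `l(C̃) = ⌊3(n+1)/μ̃⌋ − 3` and `k₀ = max{l(C̃), l(C)}`, if the sliding
matrix `𝓕_{k₀}` has maximal rank `k₀+1`, then
`d_free(C̃) ≥ d_free(C) + d(𝓕_k)` for every `k ≥ k₀`. -/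
theorem freeDist_extension_lower_bound {F : Type*} [Field F] [Fintype F] {n : ℕ}
    (G : Fin n → Polynomial F) (F0 F1 F2 : F)
    (hbasic : Ideal.span (Set.range G) = ⊤)
    (hdeg : ∀ j, (G j).natDegree ≤ 2) (hdeg2 : ∃ j, (G j).natDegree = 2)
    (hrank : Matrix.rank
      (Matrix.of fun (d : Fin 3) (j : Fin n) => (G j).coeff (d : ℕ)) = 3)
    (hrank' : Matrix.rank (Matrix.of fun (d : Fin 3) (j : Fin (n + 1)) =>
      (snocRow G (Polynomial.C F0 + Polynomial.C F1 * Polynomial.X +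
        Polynomial.C F2 * Polynomial.X ^ 2) j).coeff (d : ℕ)) = 3)
    (μ μ' : ℕ)
    (hμ : μ = minDist (Submodule.span F
      (Set.range fun d : Fin 3 => fun j : Fin n => (G j).coeff (d : ℕ))))
    (hμ' : μ' = minDist (Submodule.span F
      (Set.range fun d : Fin 3 => fun j : Fin (n + 1) =>
        (snocRow G (Polynomial.C F0 + Polynomial.C F1 * Polynomial.X +
          Polynomial.C F2 * Polynomial.X ^ 2) j).coeff (d : ℕ))))
    (k₀ : ℕ) (hk₀ : k₀ = max (3 * (n + 1) / μ' - 3) (3 * n / μ - 3))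
    (hFrank : Matrix.rank (Matrix.of fun (i : Fin (k₀ + 1)) (j : Fin (k₀ + 3)) =>
      if (j : ℕ) = (i : ℕ) then F0 else if (j : ℕ) = (i : ℕ) + 1 then F1
        else if (j : ℕ) = (i : ℕ) + 2 then F2 else 0) = k₀ + 1) :
    ∀ k ≥ k₀,
      freeDist (Submodule.span (Polynomial F) {G}) +
        minDist (Submodule.span F (Set.range fun i : Fin (k + 1) => fun j : Fin (k + 3) =>
          if (j : ℕ) = (i : ℕ) then F0 else if (j : ℕ) = (i : ℕ) + 1 then F1
            else if (j : ℕ) = (i : ℕ) + 2 then F2 else 0)) ≤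
      freeDist (Submodule.span (Polynomial F)
        {snocRow G (Polynomial.C F0 + Polynomial.C F1 * Polynomial.X +
          Polynomial.C F2 * Polynomial.X ^ 2)}) := by
  intro k hk
  have hG0 : G ≠ 0 := by
    rintro rfl
    simp at hdeg2
  have hf0 : C F0 + C F1 * X + C F2 * X ^ 2 ≠ 0 := by
    refine ne_zero_of_linearIndependent_slidingRow (δ := 2) (k := k₀) ?_
    rw [slidingRow_quadratic]
    exact linearIndependent_row_of_rank_eq_card (hFrank.trans (Fintype.card_fin _).symm)
  have hli := linearIndependent_row_of_rank_eq_card (hrank'.trans (Fintype.card_fin 3).symm)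
  have hk' : 3 * (n + 1) / μ' - 3 ≤ k := (le_max_left _ _).trans (hk₀ ▸ hk)
  rw [hμ'] at hk'
  have hbound := freeDist_extension_lower_bound_general hG0 hf0 hdeg (by compute_degree) hli hk'
  rwa [slidingCode, slidingRow_quadratic] at hbound
end
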